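/- arXiv:2309.03850 — 2 statements merged into one kernel-verified Lean document; each statement's English description precedes it below -/
import Mathlib

section
/- For every γ ∈ ℂ there exists exactly one function f : V → ℂ that is radial around v_0 and satisfies μ_1 f = γ·f and f(v_0) = 1 (the spherical function with eigenvalue γ). -/
open scoped BigOperators ComplexOrder

/-- A semi-homogeneous tree `T_{q_+,q_-}`: a connected acyclic simple graph with a
parity function `eps` (true = `+`, false = `−`) that flips across edges, in which every
vertex of parity `+` has exactly `qp + 1` neighbors and every vertex of parity `−` has
exactly `qm + 1` neighbors.  Spheres are finite (this follows from local finiteness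
and connectedness, and is recorded as a field for convenience). -/
structure SemiHomTree (qp qm : ℕ) (V : Type) where
  G : SimpleGraph V
  connected : G.Connected
  acyclic : G.IsAcyclic
  eps : V → Bool
  adj_parity : ∀ ⦃v w : V⦄, G.Adj v w → eps w = !eps v
  nbr_finite : ∀ v : V, {w : V | G.Adj v w}.Finite
  degree_plus : ∀ v : V, eps v = true → {w : V | G.Adj v w}.ncard = qp + 1
  degree_minus : ∀ v : V, eps v = false → {w : V | G.Adj v w}.ncard = qm + 1
  sphere_finite : ∀ (v : V) (n : ℕ), {w : V | G.dist v w = n}.Finite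

/-- The averaging operator `M_n`: average of `f` over the sphere of radius `n` around `v`. -/
noncomputable def Mop {qp qm : ℕ} {V : Type} (T : SemiHomTree qp qm V)
    (n : ℕ) (f : V → ℂ) (v : V) : ℂ :=
  (({w : V | T.G.dist v w = n}.ncard : ℂ))⁻¹ * ∑ᶠ w ∈ {w : V | T.G.dist v w = n}, f w

/-- The Laplace operator `μ₁`: the average of `f` over the neighbors of `v`. -/
noncomputable def lap {qp qm : ℕ} {V : Type} (T : SemiHomTree qp qm V)
    (f : V → ℂ) (v : V) : ℂ :=
  (((if T.eps v then qp else qm : ℕ) : ℂ) + 1)⁻¹ * ∑ᶠ w ∈ {w : V | T.G.Adj v w}, f w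

/-!
Every vertex `v ≠ o` of a tree has exactly one neighbor closer to the root `o`; its other neighbors
are one step farther. If `v` is at distance `n + 1` and has `q + 1` neighbors, the eigenvalue
equation at `v` for `f v = F (dist o v)` is therefore `F n + q F (n + 2) = (q + 1) γ F (n + 1)`, and
at `o` it is `F 1 = γ F 0`. When no `q` vanishes, every distance occurs in the tree, and these
equations determine all of `F` from `F 0`.
-/

section Finsum

variable {α M : Type*} [AddCommMonoid M]

lemma finsum_mem_const_eq_ncard_nsmul (s : Set α) (c : M) : ∑ᶠ _a ∈ s, c = s.ncard • c := by
  obtain rfl | hc := eq_or_ne c 0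
  · simp
  obtain hs | hs := s.finite_or_infinite
  · rw [finsum_mem_eq_finite_toFinset_sum _ hs, Finset.sum_const, Set.ncard_eq_toFinset_card s hs]
  · rw [hs.ncard, zero_nsmul, finsum_mem_eq_zero_of_infinite]
    simpa only [Function.support_const hc, Set.inter_univ] using hs

end Finsum

section RootedTree

variable {V M : Type*} [AddCommMonoid M] {G : SimpleGraph V} {o v : V} {n : ℕ}

lemma existsUnique_adj_dist_eq (hG : G.IsTree) (hv : G.dist o v = n + 1) :
    ∃! u, G.Adj v u ∧ G.dist o u = n := by
  obtain ⟨p, hp, hlen⟩ := hG.connected.exists_path_of_dist o v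
  have hpen : G.Adj v p.penultimate :=
    (p.adj_penultimate (SimpleGraph.Walk.not_nil_of_ne (by rintro rfl; simp at hv))).symm
  refine ⟨p.penultimate, ⟨hpen, ?_⟩, ?_⟩
  · have hle : G.dist o p.penultimate ≤ n := by
      have := SimpleGraph.dist_le p.dropLast
      simp only [SimpleGraph.Walk.length_dropLast] at this
      omega
    rcases hG.dist_eq_dist_add_one_of_adj o hpen with h | h <;> omega
  · rintro u ⟨hu, hdist⟩
    obtain ⟨r, hr⟩ := hG.connected.exists_walk_length_eq_dist o u
    have hgeod : (r.concat hu.symm).IsPath := SimpleGraph.Walk.isPath_of_length_eq_dist _ (by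
      rw [SimpleGraph.Walk.length_concat, hr, hdist, hv])
    have hunique : r.concat hu.symm = p := (hG.existsUnique_path o v).unique hgeod hp
    rw [← hunique, SimpleGraph.Walk.penultimate_concat]

lemma dist_eq_add_two_of_adj_of_ne_parent (hG : G.IsTree) {u w : V} (hv : G.dist o v = n + 1)
    (hu : G.Adj v u) (hun : G.dist o u = n) (hw : G.Adj v w) (hwu : w ≠ u) :
    G.dist o w = n + 2 := by
  have hwn : G.dist o w ≠ n := fun h ↦
    hwu ((existsUnique_adj_dist_eq hG hv).unique ⟨hw, h⟩ ⟨hu, hun⟩)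
  rcases hG.dist_eq_dist_add_one_of_adj o hw with h | h <;> omega

lemma exists_vertex_dist_eq (hG : G.IsTree) (ho : (G.neighborSet o).Nonempty)
    (hbranch : ∀ v ≠ o, 1 < (G.neighborSet v).ncard) : ∀ n, ∃ v, G.dist o v = n
  | 0 => ⟨o, SimpleGraph.dist_self⟩
  | 1 => ho.imp fun _ ↦ SimpleGraph.dist_eq_one_iff_adj.2
  | n + 2 => by
    obtain ⟨v, hv⟩ := exists_vertex_dist_eq hG ho hbranch (n + 1)
    obtain ⟨u, ⟨hu, hun⟩, -⟩ := existsUnique_adj_dist_eq hG hv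
    have hvo : v ≠ o := by rintro rfl; simp at hv
    obtain ⟨w, hw, hwu⟩ := Set.exists_ne_of_one_lt_ncard (hbranch v hvo) u
    exact ⟨w, dist_eq_add_two_of_adj_of_ne_parent hG hv hu hun hw hwu⟩

lemma finsum_neighborSet_root (F : ℕ → M) :
    ∑ᶠ w ∈ G.neighborSet o, F (G.dist o w) = (G.neighborSet o).ncard • F 1 := by
  rw [← finsum_mem_const_eq_ncard_nsmul]
  exact finsum_mem_congr rfl fun w hw ↦ congrArg F (SimpleGraph.dist_eq_one_iff_adj.2 hw)

lemma finsum_neighborSet_of_dist_eq_succ (hG : G.IsTree) (hv : G.dist o v = n + 1)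
    (hfin : (G.neighborSet v).Finite) (F : ℕ → M) :
    ∑ᶠ w ∈ G.neighborSet v, F (G.dist o w) =
      F n + ((G.neighborSet v).ncard - 1) • F (n + 2) := by
  obtain ⟨u, ⟨hu, hun⟩, -⟩ := existsUnique_adj_dist_eq hG hv
  have hmem : u ∈ G.neighborSet v := hu
  have hchildren : ∑ᶠ w ∈ G.neighborSet v \ {u}, F (G.dist o w) =
      ((G.neighborSet v).ncard - 1) • F (n + 2) := by
    rw [← Set.ncard_sdiff_singleton_of_mem hmem, ← finsum_mem_const_eq_ncard_nsmul]
    exact finsum_mem_congr rfl fun w hw ↦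
      congrArg F (dist_eq_add_two_of_adj_of_ne_parent hG hv hu hun hw.1 hw.2)
  rw [← finsum_mem_add_sdiff (Set.singleton_subset_iff.2 hmem) hfin, finsum_mem_singleton, hun,
    hchildren]

end RootedTree

section SphericalProfile

variable {K : Type*} [Field K]

/-- The profile of the spherical function with eigenvalue `γ` on a rooted tree whose vertices at
distance `n` from the root have `q n + 1` neighbors, given by the three-term recurrence that the
eigenvalue equation imposes on the values at distances `n`, `n + 1` and `n + 2`. The recurrence can
be solved for the last value only where `q (n + 1) ≠ 0`. -/
def sphericalProfile (q : ℕ → ℕ) (γ : K) : ℕ → K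
  | 0 => 1
  | 1 => γ
  | n + 2 => ((q (n + 1) + 1) * (γ * sphericalProfile q γ (n + 1)) - sphericalProfile q γ n) /
      q (n + 1)

lemma eq_sphericalProfile_iff [CharZero K] {q : ℕ → ℕ} (hq : ∀ n ≠ 0, q n ≠ 0) {γ : K}
    {F : ℕ → K} :
    F = sphericalProfile q γ ↔ F 0 = 1 ∧ F 1 = γ * F 0 ∧
      ∀ n, F n + q (n + 1) * F (n + 2) = (q (n + 1) + 1) * (γ * F (n + 1)) := by
  have hcast (n : ℕ) : (q (n + 1) : K) ≠ 0 := Nat.cast_ne_zero.2 (hq _ n.succ_ne_zero)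
  constructor
  · rintro rfl
    refine ⟨rfl, (mul_one γ).symm, fun n ↦ ?_⟩
    rw [sphericalProfile, mul_div_cancel₀ _ (hcast n), add_sub_cancel]
  · rintro ⟨hzero, hone, hrec⟩
    funext n
    induction n using Nat.twoStepInduction with
    | zero => exact hzero
    | one => rw [hone, hzero, mul_one, sphericalProfile]
    | more n ihn ihn' =>
      rw [sphericalProfile, ← ihn, ← ihn', eq_div_iff (hcast n), ← hrec n]
      ring

variable [CharZero K] {V : Type*} {G : SimpleGraph V} {o : V} {q : ℕ → ℕ}

lemma radial_eigenfunction_iff_recurrence (hG : G.IsTree)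
    (hdeg : ∀ v, (G.neighborSet v).ncard = q (G.dist o v) + 1) (hq : ∀ n ≠ 0, q n ≠ 0)
    {γ : K} {F : ℕ → K} :
    (∀ v, ∑ᶠ w ∈ G.neighborSet v, F (G.dist o w) =
        (G.neighborSet v).ncard * (γ * F (G.dist o v))) ↔
      F 1 = γ * F 0 ∧
        ∀ n, F n + q (n + 1) * F (n + 2) = (q (n + 1) + 1) * (γ * F (n + 1)) := by
  have hncard (v : V) : (G.neighborSet v).ncard ≠ 0 := by simp [hdeg]
  have hsum {n : ℕ} {v : V} (hv : G.dist o v = n + 1) :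
      ∑ᶠ w ∈ G.neighborSet v, F (G.dist o w) = F n + q (n + 1) * F (n + 2) := by
    rw [finsum_neighborSet_of_dist_eq_succ hG hv (Set.finite_of_ncard_ne_zero (hncard v)), hdeg,
      hv, Nat.add_sub_cancel, nsmul_eq_mul]
  constructor
  · refine fun heigen ↦ ⟨?_, fun n ↦ ?_⟩
    · have hroot := heigen o
      rw [finsum_neighborSet_root, nsmul_eq_mul, SimpleGraph.dist_self] at hroot
      exact mul_left_cancel₀ (Nat.cast_ne_zero.2 (hncard o)) hroot
    · have hbranch (v : V) (hvo : v ≠ o) : 1 < (G.neighborSet v).ncard := by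
        have := hq _ (hG.connected.pos_dist_of_ne hvo.symm).ne'
        rw [hdeg]
        omega
      obtain ⟨v, hv⟩ := exists_vertex_dist_eq hG (Set.nonempty_of_ncard_ne_zero (hncard o))
        hbranch (n + 1)
      simpa only [hsum hv, hdeg, hv, Nat.cast_add, Nat.cast_one] using heigen v
  · rintro ⟨hone, hrec⟩ v
    rcases hv : G.dist o v with _ | n
    · obtain rfl : o = v := hG.connected.dist_eq_zero_iff.1 hv
      rw [finsum_neighborSet_root, nsmul_eq_mul, hone]
    · rw [hsum hv, hrec, hdeg, hv, Nat.cast_add, Nat.cast_one]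

theorem existsUnique_radial_eigenfunction (hG : G.IsTree)
    (hdeg : ∀ v, (G.neighborSet v).ncard = q (G.dist o v) + 1) (hq : ∀ n ≠ 0, q n ≠ 0) (γ : K) :
    ∃! f : V → K, (∃ F : ℕ → K, ∀ v, f v = F (G.dist o v)) ∧
      (∀ v, ∑ᶠ w ∈ G.neighborSet v, f w = (G.neighborSet v).ncard * (γ * f v)) ∧ f o = 1 := by
  have hrec {F : ℕ → K} := radial_eigenfunction_iff_recurrence hG hdeg hq (γ := γ) (F := F)
  have hprofile {F : ℕ → K} := eq_sphericalProfile_iff hq (γ := γ) (F := F)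
  refine ⟨fun v ↦ sphericalProfile q γ (G.dist o v), ⟨⟨_, fun _ ↦ rfl⟩, ?_, ?_⟩, ?_⟩
  · exact hrec.2 (hprofile.1 rfl).2
  · exact congrArg (sphericalProfile q γ) SimpleGraph.dist_self
  · rintro f ⟨⟨F, hF⟩, heigen, hnorm⟩
    have hzero : F 0 = 1 := by rw [← hnorm, hF, SimpleGraph.dist_self]
    simp only [hF] at heigen
    funext v
    rw [hF, hprofile.2 ⟨hzero, hrec.1 heigen⟩]

end SphericalProfile

namespace SemiHomTree

variable {qp qm : ℕ} {V : Type} (T : SemiHomTree qp qm V)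

lemma isTree : T.G.IsTree := ⟨T.connected, T.acyclic⟩

lemma even_dist_iff (v w : V) : Even (T.G.dist v w) ↔ (T.eps v = true ↔ T.eps w = true) := by
  let parity : T.G.Coloring Bool := SimpleGraph.Coloring.mk T.eps fun {v w} h ↦ by
    simp [T.adj_parity h]
  obtain ⟨p, hp⟩ := T.connected.exists_walk_length_eq_dist v w
  rw [← hp]
  exact parity.even_length_iff_congr p

/-- The number of neighbors, less one, of a vertex at distance `n` from `o`: the parity of such a
vertex is `+` exactly when `n` is even and `o` has parity `+`, or `n` is odd and `o` has
parity `-`. -/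
def branching (o : V) (n : ℕ) : ℕ := if Even n ↔ T.eps o = true then qp else qm

lemma ncard_neighborSet (o v : V) :
    (T.G.neighborSet v).ncard = T.branching o (T.G.dist o v) + 1 := by
  have hparity : (Even (T.G.dist o v) ↔ T.eps o = true) ↔ T.eps v = true := by
    rw [T.even_dist_iff]
    tauto
  simp only [branching, hparity]
  cases hv : T.eps v
  · exact T.degree_minus v hv
  · exact T.degree_plus v hv

lemma lap_eq_iff {f : V → ℂ} {v : V} {c : ℂ} :
    lap T f v = c ↔ ∑ᶠ w ∈ T.G.neighborSet v, f w = (T.G.neighborSet v).ncard * c := by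
  have hdeg : ((T.G.neighborSet v).ncard : ℂ) = ((if T.eps v then qp else qm : ℕ) : ℂ) + 1 := by
    rw [T.ncard_neighborSet v v, branching]
    simp
  rw [hdeg]
  exact inv_mul_eq_iff_eq_mul₀ (Nat.cast_add_one_ne_zero _)

end SemiHomTree

theorem stmt_1_general {qp qm : ℕ} (hqp : qp ≠ 0) (hqm : qm ≠ 0) {V : Type}
    (T : SemiHomTree qp qm V) (o : V) (γ : ℂ) :
    ∃! f : V → ℂ,
      (∃ F : ℕ → ℂ, ∀ v : V, f v = F (T.G.dist o v)) ∧
        (∀ v : V, lap T f v = γ * f v) ∧ f o = 1 := by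
  have hbranch (n : ℕ) : T.branching o n ≠ 0 := by
    unfold SemiHomTree.branching
    split_ifs <;> assumption
  simp only [T.lap_eq_iff]
  exact existsUnique_radial_eigenfunction T.isTree (T.ncard_neighborSet o) (fun n _ ↦ hbranch n) γ

theorem stmt_1 {qp qm : ℕ} (hqp : 2 ≤ qp) (hqm : 2 ≤ qm) {V : Type}
    (T : SemiHomTree qp qm V) (v0 : V) (hv0 : T.eps v0 = true)
    (γ : ℂ) :
    ∃! f : V → ℂ,
      (∃ F : ℕ → ℂ, ∀ v : V, f v = F (T.G.dist v0 v)) ∧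
        (∀ v : V, lap T f v = γ * f v) ∧ f v0 = 1 :=
  stmt_1_general (by omega) (by omega) T v0 γ
end

section
/- Let F : ℕ → ℂ be finitely supported and g : V_+ → ℂ finitely supported. Define (F★g)(v) = Σ_{w ∈ V_+} F(dist(v,w))·g(w) for v ∈ V_+, and the radialization (E g)(v) = (1/#(C(|v|) ∩ V_+))·Σ_{u ∈ V_+, |u| = |v|} g(u). Then E(F★g) = F★(E g) as functions on V_+. -/
open scoped BigOperators ComplexOrder

/-- Convolution of a finitely supported profile `F` with a function `g`, over `V_+`. -/
noncomputable def convF {qp qm : ℕ} {V : Type} (T : SemiHomTree qp qm V)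
    (F : ℕ → ℂ) (g : V → ℂ) (v : V) : ℂ :=
  ∑ᶠ w ∈ {w : V | T.eps w = true}, F (T.G.dist v w) * g w

/-- Radialization around `v0`, over `V_+`. -/
noncomputable def radE {qp qm : ℕ} {V : Type} (T : SemiHomTree qp qm V)
    (v0 : V) (g : V → ℂ) (v : V) : ℂ :=
  (({u : V | T.eps u = true ∧ T.G.dist v0 u = T.G.dist v0 v}.ncard : ℂ))⁻¹ *
    ∑ᶠ u ∈ {u : V | T.eps u = true ∧ T.G.dist v0 u = T.G.dist v0 v}, g u

/-!
The radialization `E` averages over the fibers of the distance to `v₀`, so it is the self-adjoint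
projection onto radial functions. An operator with symmetric kernel commutes with it as soon as it
maps radial functions to radial functions. For a kernel `F (dist v w)` on a tree whose vertex
degrees are radial, this reduces to the claim that the number of points of a radial finite set `s`
at distance `k` from `w` is a radial function of `w`. Summing these numbers over the neighbors of
`w` expresses the count at distance `k + 2` through those at distances `k + 1` and `k`, while
neighbor sums of radial functions are radial.
-/

open Finset SimpleGraph

section FiberAverage

variable {α ι 𝕜 : Type*} {r : α → ι}

lemma finsum_eq_sum_sum_fiber {M : Type*} [AddCommMonoid M] (hr : ∀ i, {a | r a = i}.Finite)
    {f : α → M} {t : Finset ι} (hf : ∀ a, f a ≠ 0 → r a ∈ t) :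
    ∑ᶠ a, f a = ∑ i ∈ t, ∑ a ∈ (hr i).toFinset, f a := by
  classical
  have hdisj : (t : Set ι).PairwiseDisjoint fun i ↦ (hr i).toFinset := fun i _ j _ hij ↦
    Finset.disjoint_left.2 fun a ha hb ↦ hij <| by simp_all
  rw [← sum_biUnion hdisj]
  exact finsum_eq_sum_of_support_subset _ fun a ha ↦ by simpa using hf a ha

variable [DivisionSemiring 𝕜] [CharZero 𝕜]

/-- The average of `f` over the fiber of `r` through a point, that is, the conditional expectation
of `f` given `r` for the counting measure. Finiteness of the fibers is an argument, so that each
fiber is a `Finset`. -/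
noncomputable def fiberAvg (hr : ∀ i, {a | r a = i}.Finite) (f : α → 𝕜) (a : α) : 𝕜 :=
  𝔼 b ∈ (hr (r a)).toFinset, f b

variable (hr : ∀ i, {a | r a = i}.Finite)

lemma fiberAvg_of_factorsThrough {f : α → 𝕜} (hf : f.FactorsThrough r) : fiberAvg hr f = f := by
  funext a
  rw [fiberAvg, expect_congr rfl fun b hb ↦ hf (show r b = r a by simpa using hb)]
  exact expect_const ⟨a, by simp⟩ _

lemma sum_fiber_mul_fiberAvg (f g : α → 𝕜) (i : ι) :
    ∑ a ∈ (hr i).toFinset, f a * fiberAvg hr g a =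
      ∑ a ∈ (hr i).toFinset, fiberAvg hr f a * g a := by
  have fiberAvg_eq (h : α → 𝕜) :
      ∀ a ∈ (hr i).toFinset, fiberAvg hr h a = 𝔼 b ∈ (hr i).toFinset, h b := by
    intro a ha
    obtain rfl : r a = i := by simpa using ha
    rfl
  calc ∑ a ∈ (hr i).toFinset, f a * fiberAvg hr g a
      = (∑ a ∈ (hr i).toFinset, f a) * 𝔼 b ∈ (hr i).toFinset, g b := by
        rw [sum_mul]
        exact sum_congr rfl fun a ha ↦ by rw [fiberAvg_eq g a ha]
    _ = (𝔼 b ∈ (hr i).toFinset, f b) * ∑ a ∈ (hr i).toFinset, g a := by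
        rw [← card_smul_expect, ← card_smul_expect, smul_mul_assoc, mul_smul_comm]
    _ = ∑ a ∈ (hr i).toFinset, fiberAvg hr f a * g a := by
        rw [mul_sum]
        exact sum_congr rfl fun a ha ↦ by rw [fiberAvg_eq f a ha]

lemma finsum_mul_fiberAvg (f : α → 𝕜) {g : α → 𝕜} (hg : g.support.Finite) :
    ∑ᶠ a, f a * fiberAvg hr g a = ∑ᶠ a, fiberAvg hr f a * g a := by
  classical
  have mem_image {a : α} (ha : g a ≠ 0) : r a ∈ hg.toFinset.image r :=
    mem_image_of_mem r (by simpa using ha)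
  rw [finsum_eq_sum_sum_fiber (t := hg.toFinset.image r) hr,
    finsum_eq_sum_sum_fiber (t := hg.toFinset.image r) hr]
  · exact sum_congr rfl fun i _ ↦ sum_fiber_mul_fiberAvg hr f g i
  · exact fun a ha ↦ mem_image (right_ne_zero_of_mul ha)
  · intro a ha
    obtain ⟨b, hb, hgb⟩ := exists_ne_zero_of_expect_ne_zero (right_ne_zero_of_mul ha)
    have hab : r b = r a := by simpa using hb
    exact hab ▸ mem_image hgb

-- Both sides are the average of `K` over the product of the fibers through `a` and `b`.
lemma fiberAvg_kernel_swap {K : α → α → 𝕜} (hK : ∀ a b, K a b = K b a)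
    (hKr : ∀ i, (fun b ↦ ∑ a ∈ (hr i).toFinset, K a b).FactorsThrough r) (a b : α) :
    fiberAvg hr (fun c ↦ K c b) a = fiberAvg hr (K a) b := by
  have hexp (i : ι) : (fun b ↦ 𝔼 a ∈ (hr i).toFinset, K a b).FactorsThrough r :=
    (hKr i).comp_left _
  calc fiberAvg hr (fun c ↦ K c b) a
      = 𝔼 d ∈ (hr (r b)).toFinset, 𝔼 c ∈ (hr (r a)).toFinset, K c d :=
        (congrFun (fiberAvg_of_factorsThrough hr (hexp (r a))) b).symm
    _ = 𝔼 c ∈ (hr (r a)).toFinset, 𝔼 d ∈ (hr (r b)).toFinset, K d c := by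
        rw [expect_comm]
        exact expect_congr rfl fun c _ ↦ expect_congr rfl fun d _ ↦ hK c d
    _ = fiberAvg hr (fun c ↦ K c a) b :=
        congrFun (fiberAvg_of_factorsThrough hr (hexp (r b))) a
    _ = fiberAvg hr (K a) b := congrArg (fiberAvg hr · b) (funext fun c ↦ hK c a)

theorem fiberAvg_finsum_mul {K : α → α → 𝕜} (hK : ∀ a b, K a b = K b a)
    (hKr : ∀ i, (fun b ↦ ∑ a ∈ (hr i).toFinset, K a b).FactorsThrough r)
    {g : α → 𝕜} (hg : g.support.Finite) (a : α) :
    fiberAvg hr (fun b ↦ ∑ᶠ c, K b c * g c) a = ∑ᶠ c, K a c * fiberAvg hr g c := by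
  have hsum (k : α → 𝕜) : ∑ᶠ c, k c * g c = ∑ c ∈ hg.toFinset, k c * g c :=
    finsum_eq_sum_of_support_subset _ fun c hc ↦ by simpa using right_ne_zero_of_mul hc
  calc fiberAvg hr (fun b ↦ ∑ᶠ c, K b c * g c) a
      = ∑ᶠ c, fiberAvg hr (fun b ↦ K b c) a * g c := by
        rw [hsum]
        simp only [hsum, fiberAvg, expect_sum_comm, expect_mul]
    _ = ∑ᶠ c, fiberAvg hr (K a) c * g c := by
        simp only [fiberAvg_kernel_swap hr hK hKr a]
    _ = ∑ᶠ c, K a c * fiberAvg hr g c := (finsum_mul_fiberAvg hr (K a) hg).symm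

end FiberAverage

section Tree

variable {V : Type*} {G : SimpleGraph V}

lemma existsUnique_adj_dist_add_one_eq (hG : G.IsTree) {u w : V} (huw : u ≠ w) :
    ∃! x, G.Adj w x ∧ G.dist u x + 1 = G.dist u w := by
  obtain ⟨p, hp⟩ := hG.connected.exists_walk_length_eq_dist u w
  have hp_nil : ¬p.Nil := Walk.not_nil_of_ne huw
  refine ⟨p.penultimate, ⟨(p.adj_penultimate hp_nil).symm, ?_⟩, fun x ⟨hwx, hx⟩ ↦ ?_⟩
  · have hle := dist_le p.dropLast
    have hstep := hG.dist_eq_dist_add_one_of_adj u (p.adj_penultimate hp_nil)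
    have := p.length_dropLast_add_one hp_nil
    omega
  · obtain ⟨q, hq⟩ := hG.connected.exists_walk_length_eq_dist u x
    have hpath : (q.concat hwx.symm).IsPath :=
      Walk.isPath_of_length_eq_dist _ (by rw [Walk.length_concat, hq, hx])
    rw [← (hG.existsUnique_path u w).unique hpath (p.isPath_of_length_eq_dist hp),
      Walk.penultimate_concat]

/-- `f` is radial about `v₀`: its value at a vertex depends only on the distance to `v₀`. -/
abbrev IsRadial {β : Type*} (G : SimpleGraph V) (v₀ : V) (f : V → β) : Prop :=
  f.FactorsThrough (G.dist v₀)

variable [G.LocallyFinite]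

lemma card_filter_neighborFinset_dist_add_one_eq (hG : G.IsTree) (u w : V) :
    #{x ∈ G.neighborFinset w | G.dist u x + 1 = G.dist u w} = min (G.dist u w) 1 := by
  rcases eq_or_ne u w with rfl | huw
  · simp
  · rw [min_eq_right (hG.connected.pos_dist_of_ne huw), card_eq_one, singleton_iff_unique_mem]
    simpa using existsUnique_adj_dist_add_one_eq hG huw

-- `min (G.dist u w) 1` counts the neighbors of `w` closer to `u`; it vanishes at `w = u`, the only
-- case where `G.dist u w - 1` is truncated.
lemma sum_neighborFinset_dist (hG : G.IsTree) {M : Type*} [AddCommMonoid M] (h : ℕ → M)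
    (u w : V) :
    ∑ x ∈ G.neighborFinset w, h (G.dist u x) =
      min (G.dist u w) 1 • h (G.dist u w - 1) +
        (G.degree w - min (G.dist u w) 1) • h (G.dist u w + 1) := by
  have hcard := card_filter_neighborFinset_dist_add_one_eq hG u w
  have hcard' := card_filter_add_card_filter_not (s := G.neighborFinset w)
    (fun x ↦ G.dist u x + 1 = G.dist u w)
  rw [card_neighborFinset_eq_degree, hcard] at hcard'
  rw [← sum_filter_add_sum_filter_not _ fun x ↦ G.dist u x + 1 = G.dist u w]
  congr 1
  · rw [← hcard]
    refine sum_eq_card_nsmul fun x hx ↦ ?_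
    rw [← (mem_filter.1 hx).2, Nat.add_sub_cancel]
  · rw [← hcard', Nat.add_sub_cancel_left]
    refine sum_eq_card_nsmul fun x hx ↦ ?_
    simp only [mem_filter, mem_neighborFinset] at hx
    rw [(hG.dist_eq_dist_add_one_of_adj u hx.1).resolve_left (Ne.symm hx.2)]

lemma sum_neighborFinset_card_dist_eq_zero (hG : G.IsTree) (s : Finset V) (w : V) :
    ∑ x ∈ G.neighborFinset w, #{u ∈ s | G.dist u x = 0} = #{u ∈ s | G.dist u w = 1} := by
  simp only [card_filter]
  rw [sum_comm]
  refine sum_congr rfl fun u _ ↦ ?_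
  rw [sum_neighborFinset_dist hG (fun d ↦ if d = 0 then 1 else 0)]
  grind

lemma sum_neighborFinset_card_dist_eq_succ (hG : G.IsTree) (s : Finset V) (k : ℕ) (w : V) :
    ∑ x ∈ G.neighborFinset w, #{u ∈ s | G.dist u x = k + 1} =
      #{u ∈ s | G.dist u w = k + 2} + (G.degree w - min k 1) * #{u ∈ s | G.dist u w = k} := by
  simp only [card_filter, mul_sum]
  rw [sum_comm, ← sum_add_distrib]
  refine sum_congr rfl fun u _ ↦ ?_
  rw [sum_neighborFinset_dist hG (fun d ↦ if d = k + 1 then 1 else 0)]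
  generalize G.degree w = n
  rcases G.dist u w with _ | d <;> grind

variable {v₀ : V}

lemma IsRadial.sum_neighborFinset {M : Type*} [AddCommMonoid M] {f : V → M}
    (hf : IsRadial G v₀ f) (hG : G.IsTree) (hdeg : IsRadial G v₀ (G.degree ·)) :
    IsRadial G v₀ fun w ↦ ∑ x ∈ G.neighborFinset w, f x := by
  obtain ⟨h, rfl⟩ := (Function.factorsThrough_iff f).1 hf
  intro x y hxy
  simp only [Function.comp_apply, sum_neighborFinset_dist hG, hxy, hdeg hxy]

lemma isRadial_card_filter_dist_eq (hG : G.IsTree) (hdeg : IsRadial G v₀ (G.degree ·))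
    {s : Finset V} (hs : IsRadial G v₀ (· ∈ s)) (k : ℕ) :
    IsRadial G v₀ fun w ↦ #{u ∈ s | G.dist u w = k} := by
  classical
  have isRadial_zero : IsRadial G v₀ fun w ↦ #{u ∈ s | G.dist u w = 0} := by
    have hcount (w : V) : #{u ∈ s | G.dist u w = 0} = if w ∈ s then 1 else 0 := by
      simp [hG.connected.dist_eq_zero_iff, card_filter]
    intro x y hxy
    have hmem : (x ∈ s) = (y ∈ s) := hs hxy
    simp only [hcount, hmem]
  induction k using Nat.twoStepInduction with
  | zero => exact isRadial_zero
  | one =>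
    simpa only [sum_neighborFinset_card_dist_eq_zero hG s, zero_add] using
      isRadial_zero.sum_neighborFinset hG hdeg
  | more k ih ih' =>
    intro x y hxy
    have hsum := ih'.sum_neighborFinset hG hdeg hxy
    have hdeg_eq : G.degree x = G.degree y := hdeg hxy
    have hcount : #{u ∈ s | G.dist u x = k} = #{u ∈ s | G.dist u y = k} := ih hxy
    simp only [sum_neighborFinset_card_dist_eq_succ hG s, hdeg_eq, hcount] at hsum
    exact Nat.add_right_cancel hsum

lemma isRadial_sum_dist (hG : G.IsTree) (hdeg : IsRadial G v₀ (G.degree ·))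
    {s : Finset V} (hs : IsRadial G v₀ (· ∈ s)) {M : Type*} [AddCommMonoid M] (F : ℕ → M) :
    IsRadial G v₀ fun w ↦ ∑ u ∈ s, F (G.dist u w) := by
  intro x y hxy
  have hdist : s.val.map (G.dist · x) = s.val.map (G.dist · y) := by
    ext k
    simpa [Multiset.count_map, Finset.card, eq_comm] using
      isRadial_card_filter_dist_eq hG hdeg hs k hxy
  have hmap (w : V) : ∑ u ∈ s, F (G.dist u w) = ((s.val.map (G.dist · w)).map F).sum := by
    rw [Multiset.map_map]
    rfl
  simp only [hmap, hdist]

theorem fiberAvg_finsum_dist_mul (hG : G.IsTree) (hdeg : IsRadial G v₀ (G.degree ·))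
    (hsphere : ∀ n, {w | G.dist v₀ w = n}.Finite) {𝕜 : Type*} [DivisionSemiring 𝕜] [CharZero 𝕜]
    (F : ℕ → 𝕜) {g : V → 𝕜} (hg : g.support.Finite) (v : V) :
    fiberAvg hsphere (fun u ↦ ∑ᶠ w, F (G.dist u w) * g w) v =
      ∑ᶠ w, F (G.dist v w) * fiberAvg hsphere g w := by
  refine fiberAvg_finsum_mul hsphere (fun u w ↦ by rw [dist_comm]) (fun n ↦ ?_) hg v
  refine isRadial_sum_dist hG hdeg (fun x y hxy ↦ ?_) F
  simp [hxy]

end Tree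

namespace SemiHomTree

variable {qp qm : ℕ} {V : Type} (T : SemiHomTree qp qm V) (v₀ : V)

lemma isRadial_eps : IsRadial T.G v₀ T.eps := by
  intro x y hxy
  let parity : T.G.Coloring Bool :=
    Coloring.mk T.eps fun h ↦ by simp [T.adj_parity h]
  obtain ⟨p, hp⟩ := T.connected.exists_walk_length_eq_dist v₀ x
  obtain ⟨q, hq⟩ := T.connected.exists_walk_length_eq_dist v₀ y
  have hpq : (parity v₀ ↔ parity x) ↔ (parity v₀ ↔ parity y) := by
    rw [← parity.even_length_iff_congr p, ← parity.even_length_iff_congr q, hp, hq, hxy]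
  exact (by grind : parity x = parity y)

noncomputable instance : T.G.LocallyFinite := fun v ↦ (T.nbr_finite v).fintype

lemma degree_eq (v : V) : T.G.degree v = if T.eps v = true then qp + 1 else qm + 1 := by
  have hncard : T.G.degree v = {w | T.G.Adj v w}.ncard := by
    rw [← card_neighborSet_eq_degree, ← Nat.card_eq_fintype_card]
    rfl
  rw [hncard]
  split_ifs with h
  · exact T.degree_plus v h
  · exact T.degree_minus v (Bool.eq_false_of_not_eq_true h)

lemma isRadial_degree : IsRadial T.G v₀ (T.G.degree ·) := fun x y hxy ↦ by
  simp only [degree_eq, T.isRadial_eps v₀ hxy]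

/-- The set `V_+` of vertices of parity `+`. -/
def plus : Set V := {v | T.eps v = true}

variable (g : V → ℂ)

lemma radE_eq_fiberAvg {v : V} (hv : T.eps v = true) :
    radE T v₀ g v = fiberAvg (T.sphere_finite v₀) g v := by
  have hsphere : {u | T.eps u = true ∧ T.G.dist v₀ u = T.G.dist v₀ v} =
      {u | T.G.dist v₀ u = T.G.dist v₀ v} := by
    ext u
    exact and_iff_right_of_imp fun hu ↦ (T.isRadial_eps v₀ hu).trans hv
  rw [radE, hsphere, Set.ncard_eq_toFinset_card _ (T.sphere_finite v₀ _),
    finsum_mem_eq_finite_toFinset_sum _ (T.sphere_finite v₀ _), fiberAvg, expect_eq_sum_div_card,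
    div_eq_inv_mul]

lemma fiberAvg_indicator_plus :
    fiberAvg (T.sphere_finite v₀) (T.plus.indicator g) =
      T.plus.indicator (radE T v₀ g) := by
  funext v
  have mem_plus_iff {u : V} (hu : u ∈ (T.sphere_finite v₀ (T.G.dist v₀ v)).toFinset) :
      u ∈ T.plus ↔ v ∈ T.plus := by
    have heps : T.eps u = T.eps v := T.isRadial_eps v₀ (by simpa using hu)
    simp only [plus, Set.mem_ofPred_eq, heps]
  by_cases hv : v ∈ T.plus
  · rw [Set.indicator_of_mem hv, T.radE_eq_fiberAvg v₀ g hv]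
    exact expect_congr rfl fun u hu ↦ Set.indicator_of_mem ((mem_plus_iff hu).2 hv) g
  · rw [Set.indicator_of_notMem hv]
    exact expect_eq_zero fun u hu ↦ Set.indicator_of_notMem (mt (mem_plus_iff hu).1 hv) g

lemma convF_eq_finsum_indicator (F : ℕ → ℂ) (v : V) :
    convF T F g v = ∑ᶠ w, F (T.G.dist v w) * T.plus.indicator g w := by
  rw [convF, finsum_mem_def]
  exact finsum_congr fun w ↦ Set.indicator_mul_right _ _ _

end SemiHomTree

theorem stmt_13_general {qp qm : ℕ} {V : Type} (T : SemiHomTree qp qm V) (v0 : V)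
    (F : ℕ → ℂ) (g : V → ℂ) (hg : (Function.support g).Finite) (v : V) (hv : T.eps v = true) :
    radE T v0 (convF T F g) v = convF T F (radE T v0 g) v := by
  have hg_plus : (T.plus.indicator g).support.Finite :=
    hg.subset (Set.support_indicator.trans_subset Set.inter_subset_right)
  rw [T.radE_eq_fiberAvg v0 _ hv, T.convF_eq_finsum_indicator, ← T.fiberAvg_indicator_plus,
    ← fiberAvg_finsum_dist_mul ⟨T.connected, T.acyclic⟩ (T.isRadial_degree v0) _ F hg_plus]
  simp only [← T.convF_eq_finsum_indicator]

theorem stmt_13 {qp qm : ℕ} (hqp : 2 ≤ qp) (hqm : 2 ≤ qm) {V : Type}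
    (T : SemiHomTree qp qm V) (v0 : V) (hv0 : T.eps v0 = true)
    (F : ℕ → ℂ) (hF : (Function.support F).Finite)
    (g : V → ℂ) (hg : (Function.support g).Finite)
    (hgplus : ∀ v : V, g v ≠ 0 → T.eps v = true) :
    ∀ v : V, T.eps v = true →
      radE T v0 (convF T F g) v = convF T F (radE T v0 g) v :=
  stmt_13_general T v0 F g hg
end
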